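/- arXiv:2012.12623 — 2 statements merged into one kernel-verified Lean document; each statement's English description precedes it below -/
import Mathlib

section
/- Let n ≥ 1 and suppose the Kasteleyn matrix K_n, regarded as a matrix over ℚ, is invertible. Then for every integer 0 ≤ i ≤ n−1, the ((2i,2n+1), b_n) entry of K_n⁻¹ equals (−1)^{n−i} · p(n,i,0). -/
open Finset

/-- Membership predicate for the vertex set `V_n` of the TSSCPP graph `G_n`:
`0 ≤ x₁ ≤ 2n`, `x₁ ≤ x₂ ≤ 2n+1`, with `(2n,2n+1)` removed when `n` is odd. -/
def memV (n : ℕ) (x : ℤ × ℤ) : Prop :=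
  0 ≤ x.1 ∧ x.1 ≤ 2*(n:ℤ) ∧ x.1 ≤ x.2 ∧ x.2 ≤ 2*(n:ℤ)+1 ∧
    ¬(n % 2 = 1 ∧ x.1 = 2*(n:ℤ) ∧ x.2 = 2*(n:ℤ)+1)

instance memV.decPred (n : ℕ) : DecidablePred (memV n) := fun x => by
  unfold memV; infer_instance

/-- The vertex set `V_n` as a finite set. -/
noncomputable def Vfin (n : ℕ) : Finset (ℤ × ℤ) :=
  (Finset.Icc (0:ℤ) (2*(n:ℤ)) ×ˢ Finset.Icc (0:ℤ) (2*(n:ℤ)+1)).filter (memV n)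

/-- The vertex set `V_n` as a set. -/
def Vset (n : ℕ) : Set (ℤ × ℤ) := {x | memV n x}

/-- The distinguished vertex `b_n = (2n, 2n+1-(n mod 2))`. -/
def bvertex (n : ℕ) : ℤ × ℤ := (2*(n:ℤ), 2*(n:ℤ)+1 - ((n % 2 : ℕ) : ℤ))

/-- Edge relation (with `x` the "lower-left" endpoint) of the TSSCPP graph `G_n`:
horizontal edges `((x₁,x₂),(x₁+1,x₂))` for `0 ≤ x₁ ≤ 2n−1`, `x₁ ≤ x₂ ≤ 2n+1`, `x₁+x₂` odd;
vertical edges `((x₁,x₂),(x₁,x₂+1))` for `0 ≤ x₁ ≤ 2n` (`2n−1` when `n` odd), `x₁ ≤ x₂ ≤ 2n`;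
diagonal edges `((x₁,x₁),(x₁+1,x₁+1))` for `0 ≤ x₁ ≤ 2n−1`. -/
def edgeRel (n : ℕ) (x y : ℤ × ℤ) : Prop :=
  (y.1 = x.1 + 1 ∧ y.2 = x.2 ∧ 0 ≤ x.1 ∧ x.1 ≤ 2*(n:ℤ) - 1 ∧ x.1 ≤ x.2 ∧
      x.2 ≤ 2*(n:ℤ)+1 ∧ Odd (x.1 + x.2)) ∨
  (y.1 = x.1 ∧ y.2 = x.2 + 1 ∧ 0 ≤ x.1 ∧ x.1 ≤ 2*(n:ℤ) - ((n % 2 : ℕ) : ℤ) ∧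
      x.1 ≤ x.2 ∧ x.2 ≤ 2*(n:ℤ)) ∨
  (x.1 = x.2 ∧ y.1 = x.1 + 1 ∧ y.2 = x.2 + 1 ∧ 0 ≤ x.1 ∧ x.1 ≤ 2*(n:ℤ) - 1)

/-- The TSSCPP graph `G_n` (as a graph on all of `ℤ × ℤ`; all of its edges join
vertices of `V_n`). -/
def Gph (n : ℕ) : SimpleGraph (ℤ × ℤ) where
  Adj x y := edgeRel n x y ∨ edgeRel n y x
  symm := ⟨fun x y h => Or.symm h⟩
  loopless := by
    refine ⟨?_⟩
    rintro ⟨x1, x2⟩ (h | h) <;>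
      rcases h with ⟨h1, h2, -⟩ | ⟨h1, h2, -⟩ | ⟨h0, h1, h2, -⟩ <;> omega

/-- `Zpm n U` = number of perfect matchings of the subgraph of `G_n` induced on `V_n \ U`. -/
noncomputable def Zpm (n : ℕ) (U : Set (ℤ × ℤ)) : ℕ :=
  Nat.card {M : ((Gph n).induce (Vset n \ U)).Subgraph // M.IsPerfectMatching}

/-- The entry function `k(x,y)` of the Kasteleyn matrix. -/
def kfun (x y : ℤ × ℤ) : ℚ :=
  if ((x.1 + x.2) % 2 = 0 ∧ x.2 = y.2 ∧ x.1 - y.1 = 1) ∨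
     ((x.1 + x.2) % 2 = 0 ∧ x.1 = y.1 ∧ (y.2 - x.2 = 1 ∨ x.2 - y.2 = 1)) ∨
     (x.1 = x.2 ∧ y.1 = y.2 ∧ y.1 = x.1 - 1)
  then 1 else 0

/-- The Kasteleyn matrix `K_n` of `G_n` over `ℚ`, rows and columns indexed by `V_n`. -/
def Kmat (n : ℕ) : Matrix ↥(Vfin n) ↥(Vfin n) ℚ :=
  fun x y => kfun x.val y.val - kfun y.val x.val

/-- `p(n,k,ℓ) = (−1)^k (3n−3k+2) C_{n−k} (n+k−2ℓ+1)! (2n−k−ℓ+1)! / ((k−ℓ)! (3n−k+2−2ℓ)!)`. -/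
def pnk (n k l : ℕ) : ℚ :=
  (-1)^k * (3*(n:ℚ) - 3*(k:ℚ) + 2) * (catalan (n-k) : ℚ) *
    (Nat.factorial (n+k-2*l+1) : ℚ) * (Nat.factorial (2*n-k-l+1) : ℚ) /
    ((Nat.factorial (k-l) : ℚ) * (Nat.factorial (3*n-k+2-2*l) : ℚ))


/-- The reciprocal factorial `1/z!`, extended by zero to negative integers. -/
noncomputable def invFact (z : ℤ) : ℚ :=
  if z < 0 then 0 else ((Nat.factorial z.toNat : ℚ))⁻¹

lemma invFact_of_neg {z : ℤ} (hz : z < 0) : invFact z = 0 := if_pos hz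

lemma invFact_natCast (m : ℕ) : invFact m = ((Nat.factorial m : ℚ))⁻¹ := by
  simp [invFact]

lemma mul_invFact (z : ℤ) : (z : ℚ) * invFact z = invFact (z - 1) := by
  rcases lt_trichotomy z 0 with hz | rfl | hz
  · rw [invFact_of_neg hz, invFact_of_neg (by omega), mul_zero]
  · rw [invFact_of_neg (z := 0 - 1) (by omega)]; simp
  · obtain ⟨m, rfl⟩ : ∃ m : ℕ, z = (m : ℤ) + 1 := ⟨(z - 1).toNat, by omega⟩
    have h1 : ((m : ℤ) + 1) = ((m + 1 : ℕ) : ℤ) := by push_cast; ring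
    rw [add_sub_cancel_right, h1, invFact_natCast, invFact_natCast, Nat.factorial_succ]
    have := Nat.factorial_ne_zero m
    push_cast
    field_simp

/-- The signed binomial coefficient `(-1)^u * binom(u, z)`, extended by zero. -/
noncomputable def signedBinom (u z : ℤ) : ℚ :=
  if u < 0 then 0 else
    (-1) ^ u.toNat * (Nat.factorial u.toNat : ℚ) * invFact z * invFact (u - z)

lemma signedBinom_of_neg {u : ℤ} (hu : u < 0) (z : ℤ) : signedBinom u z = 0 := if_pos hu

lemma signedBinom_natCast (u : ℕ) (z : ℤ) : signedBinom u z =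
    (-1) ^ u * (Nat.factorial u : ℚ) * invFact z * invFact (u - z) := by
  simp [signedBinom]

lemma signedBinom_of_right_neg (u : ℤ) {z : ℤ} (hz : z < 0) : signedBinom u z = 0 := by
  simp [signedBinom, invFact_of_neg hz]

lemma signedBinom_of_lt {u z : ℤ} (h : u < z) : signedBinom u z = 0 := by
  simp [signedBinom, invFact_of_neg (z := u - z) (by omega)]

lemma signedBinom_zero_zero : signedBinom 0 0 = 1 := by
  simp [signedBinom, invFact]

/-- Pascal's rule, which only fails at the apex. -/
lemma signedBinom_pascal (u z : ℤ) (h : u ≠ -1 ∨ z ≠ -1) :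
    signedBinom u z + signedBinom u (z + 1) + signedBinom (u + 1) (z + 1) = 0 := by
  rcases lt_or_ge u 0 with hu | hu
  · rw [signedBinom_of_neg hu, signedBinom_of_neg hu]
    rcases lt_or_ge (u + 1) 0 with hu' | hu'
    · rw [signedBinom_of_neg hu']; ring
    · rcases lt_or_ge z (-1) with hz | hz
      · rw [signedBinom_of_right_neg _ (by omega)]; ring
      · rw [signedBinom_of_lt (by omega)]; ring
  · lift u to ℕ using hu
    have h1 : ((u : ℤ) + 1) = ((u + 1 : ℕ) : ℤ) := by push_cast; ring
    rw [h1, signedBinom_natCast, signedBinom_natCast, signedBinom_natCast, Nat.factorial_succ]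
    have e1 := mul_invFact (z + 1)
    have e2 := mul_invFact ((u : ℤ) - z)
    rw [add_sub_cancel_right] at e1
    rw [show (u : ℤ) - (z + 1) = u - z - 1 by ring,
      show ((u + 1 : ℕ) : ℤ) - (z + 1) = u - z by push_cast; ring, ← e1, ← e2]
    push_cast
    ring

/-- The `m`-th power of `1 + shift` applied to `g`. -/
def binShift : ℕ → (ℤ → ℚ) → ℤ → ℚ
  | 0, g, a => g a
  | m + 1, g, a => binShift m g a + binShift m g (a + 1)

lemma binShift_succ (m : ℕ) (g : ℤ → ℚ) (a : ℤ) :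
    binShift (m + 1) g a = binShift m g a + binShift m g (a + 1) := rfl

lemma binShift_sum {ι : Type*} (s : Finset ι) (c : ι → ℚ) (g : ι → ℤ → ℚ) (m : ℕ) (a : ℤ) :
    binShift m (fun b => ∑ i ∈ s, c i * g i b) a = ∑ i ∈ s, c i * binShift m (g i) a := by
  induction m generalizing a with
  | zero => rfl
  | succ m ih => simp only [binShift, ih, mul_add, Finset.sum_add_distrib]

lemma binShift_signedBinom (u : ℕ) (s : ℤ) (m : ℕ) (a : ℤ) :
    binShift m (fun b => signedBinom u (b + s)) a
      = (-1) ^ m * signedBinom (u + m) (a + s + m) := by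
  induction m generalizing a with
  | zero => simp [binShift]
  | succ m ih =>
    have h := signedBinom_pascal (u + m) (a + s + m) (Or.inl (by omega))
    rw [binShift, ih, ih]
    push_cast
    rw [show a + 1 + s + m = a + s + m + 1 by ring, ← add_assoc, ← add_assoc, pow_succ]
    linear_combination (-1) ^ m * h

lemma binShift_sub_two_mul {e F : ℤ → ℚ} (he : ∀ b, 0 ≤ b → e b - e (b + 2) = F (b + 1))
    (m : ℕ) (a : ℤ) (ha : 0 ≤ a) :
    binShift (m + 2) e a = 2 * binShift (m + 1) e (a + 2)
      + (binShift m F (a + 1) + 2 * binShift m F (a + 2)) := by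
  induction m generalizing a with
  | zero =>
    have h0 := he a ha
    have h1 := he (a + 1) (by omega)
    simp only [binShift]
    rw [show a + 1 + 2 = a + 2 + 1 by ring, show a + 1 + 1 = a + 2 by ring] at h1
    rw [show a + 1 + 1 = a + 2 by ring]
    linear_combination h0 + 2 * h1
  | succ m ih =>
    have h0 := ih a ha
    have h1 := ih (a + 1) (by omega)
    rw [binShift_succ (m + 2), h0, h1, binShift_succ (m + 1) e (a + 2), binShift_succ m F (a + 1),
      binShift_succ m F (a + 2)]
    rw [show a + 1 + 2 = a + 2 + 1 by ring, show a + 1 + 1 = a + 2 by ring]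
    ring

/-- The numbers `(3m+2) C_m (2n-m+1)! (n+m+1)! / ((n-m)! (2n+m+2)!)`. -/
noncomputable def tauCoeff (n m : ℕ) : ℚ :=
  (3 * (m : ℚ) + 2) * (catalan m : ℚ) * (Nat.factorial (2 * n + 1 - m) : ℚ) *
    (Nat.factorial (n + m + 1) : ℚ) * invFact (n - m) * invFact (2 * n + m + 2)

lemma catalan_succ_mul (m : ℕ) :
    ((m : ℚ) + 2) * (catalan (m + 1) : ℚ) = 2 * (2 * m + 1) * (catalan m : ℚ) := by
  have h0 := succ_mul_catalan_eq_centralBinom m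
  have h1 := succ_mul_catalan_eq_centralBinom (m + 1)
  have h2 := Nat.succ_mul_centralBinom_succ m
  rw [← h0, ← h1] at h2
  have h3 : ((m : ℚ) + 1) * ((m + 1 + 1) * catalan (m + 1))
      = 2 * (2 * m + 1) * ((m + 1) * catalan m) := by exact_mod_cast h2
  have h4 : (m : ℚ) + 1 ≠ 0 := by positivity
  apply mul_left_cancel₀ h4
  linear_combination h3

lemma factorial_sub_succ {a m : ℕ} (h : m < a) :
    (Nat.factorial (a - m) : ℚ) = ((a : ℚ) - m) * Nat.factorial (a - (m + 1)) := by
  obtain ⟨d, rfl⟩ := Nat.exists_eq_add_of_lt h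
  rw [show m + d + 1 - m = d + 1 by omega, show m + d + 1 - (m + 1) = d by omega,
    Nat.factorial_succ]
  push_cast
  ring

lemma sum_tauCoeff_add_succ (n : ℕ) :
    ∑ m ∈ range (n + 1), (-2 : ℚ) ^ m * tauCoeff n m
      + ∑ m ∈ range (n + 2), (-2 : ℚ) ^ m * tauCoeff (n + 1) m = 1 := by
  let G : ℕ → ℚ := fun m => -(2 * (n : ℚ) + 3) * (-2) ^ m * ((m + 1) * (catalan m : ℚ)) *
    Nat.factorial (2 * n + 2 - m) * Nat.factorial (n + 1 + m) *
    invFact (n + 1 - m) * invFact (2 * n + 3 + m)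
  have hlast : tauCoeff n (n + 1) = 0 := by
    simp [tauCoeff, invFact_of_neg (z := -1) (by omega)]
  have hsum : ∑ m ∈ range (n + 1), (-2 : ℚ) ^ m * tauCoeff n m
      = ∑ m ∈ range (n + 2), (-2 : ℚ) ^ m * tauCoeff n m := by
    rw [sum_range_succ _ (n + 1), hlast, mul_zero, add_zero]
  have hG0 : G 0 = -1 := by
    have h1 := invFact_natCast (n + 1)
    have h2 := invFact_natCast (2 * n + 3)
    push_cast at h1 h2
    have h3 := Nat.factorial_ne_zero (n + 1)
    have h4 := Nat.factorial_ne_zero (2 * n + 2)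
    simp only [G, Nat.cast_zero, add_zero, sub_zero, Nat.sub_zero, h1, h2, catalan_zero]
    rw [Nat.factorial_succ (2 * n + 2)]
    push_cast
    field_simp
    ring
  have hGlast : G (n + 2) = 0 := by
    simp [G, show (n : ℤ) + 1 - (n + 2) = -1 by ring, invFact_of_neg (z := -1) (by omega)]
  rw [hsum, ← sum_add_distrib]
  calc ∑ m ∈ range (n + 2), ((-2 : ℚ) ^ m * tauCoeff n m + (-2) ^ m * tauCoeff (n + 1) m)
      = ∑ m ∈ range (n + 2), (G (m + 1) - G m) := by
        refine sum_congr rfl fun m hm => ?_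
        have hm' : m ≤ n + 1 := by simpa [Nat.lt_succ_iff] using hm
        have hC := catalan_succ_mul m
        have hA := factorial_sub_succ (a := 2 * n + 2) (m := m) (by omega)
        have hA' := factorial_sub_succ (a := 2 * n + 3) (m := m) (by omega)
        rw [show 2 * n + 3 - (m + 1) = 2 * n + 2 - m by omega, hA,
          show 2 * n + 2 - (m + 1) = 2 * n + 1 - m by omega] at hA'
        rw [show 2 * n + 2 - (m + 1) = 2 * n + 1 - m by omega] at hA
        have hP := mul_invFact ((n : ℤ) + 1 - m)
        have hQ := mul_invFact (2 * (n : ℤ) + 4 + m)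
        have hQ' := mul_invFact (2 * (n : ℤ) + 3 + m)
        rw [show (n : ℤ) + 1 - m - 1 = n - m by ring] at hP
        rw [show 2 * (n : ℤ) + 4 + m - 1 = 2 * n + 3 + m by ring] at hQ
        rw [← hQ, show 2 * (n : ℤ) + 3 + m - 1 = 2 * n + m + 2 by ring] at hQ'
        simp only [G, tauCoeff, Nat.cast_add, Nat.cast_one]
        rw [show 2 * (n + 1) + 1 - m = 2 * n + 3 - m by omega,
          show 2 * n + 2 - (m + 1) = 2 * n + 1 - m by omega,
          show n + 1 + m + 1 = n + m + 1 + 1 by omega,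
          show n + 1 + (m + 1) = n + m + 1 + 1 by omega,
          show n + 1 + m = n + m + 1 by omega,
          show (n : ℤ) + 1 - (m + 1) = n - m by ring,
          show 2 * (n : ℤ) + 3 + (m + 1) = 2 * n + 4 + m by ring,
          show 2 * ((n : ℤ) + 1) + m + 2 = 2 * n + 4 + m by ring,
          hA', hA, ← hP, ← hQ', ← hQ, Nat.factorial_succ (n + m + 1),
          show (m : ℚ) + 1 + 1 = m + 2 by ring, hC, pow_succ]
        push_cast
        ring
    _ = 1 := by rw [sum_range_sub, hGlast, hG0]; norm_num

lemma sum_tauCoeff (n : ℕ) :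
    ∑ m ∈ range (n + 1), (-2 : ℚ) ^ m * tauCoeff n m = (1 + (-1) ^ n) / 2 := by
  induction n with
  | zero =>
    simp [tauCoeff, invFact]
  | succ n ih =>
    have h := sum_tauCoeff_add_succ n
    rw [ih] at h
    rw [pow_succ]
    linear_combination h

/-- `(l+m)! / ((2l-m)! (2m-l+1)!)`, extended by zero. -/
noncomputable def betaCoeff (l m : ℕ) : ℚ :=
  (Nat.factorial (l + m) : ℚ) * invFact (2 * l - m) * invFact (2 * m - l + 1)

lemma sum_tauCoeff_betaCoeff_succ (n l : ℕ) :
    l * (4 * ((n : ℚ) + 1) ^ 2 - (l + 1) ^ 2)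
        * ∑ m ∈ range (n + 1), (-1) ^ m * tauCoeff n m * betaCoeff l m
      + 2 * (2 * l + 3) * (((n : ℚ) + 1) ^ 2 - (l + 1) ^ 2)
        * ∑ m ∈ range (n + 1), (-1) ^ m * tauCoeff n m * betaCoeff (l + 1) m = 0 := by
  let G : ℕ → ℚ := fun m => -(3 * (l : ℚ) + 3) * (-1) ^ m * ((m + 1) * (catalan m : ℚ)) *
    (Nat.factorial (l + m) * invFact (2 * l + 2 - m) * invFact (2 * m - l - 1)) *
    (Nat.factorial (2 * n + 2 - m) * Nat.factorial (n + m + 1) *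
      invFact (n - m) * invFact (2 * n + m + 1))
  have hG0 : G 0 = 0 := by
    simp [G, invFact_of_neg (z := -(l : ℤ) - 1) (by omega)]
  have hGlast : G (n + 1) = 0 := by
    simp [G, invFact_of_neg (z := -1) (by omega)]
  rw [mul_sum, mul_sum, ← sum_add_distrib]
  refine (sum_congr rfl fun m hm => ?_).trans
    ((sum_range_sub G (n + 1)).trans (by rw [hGlast, hG0, sub_zero]))
  have hm' : m ≤ n := by simpa [Nat.lt_succ_iff] using hm
  have hC := catalan_succ_mul m
  have hA := factorial_sub_succ (a := 2 * n + 2) (m := m) (by omega)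
  rw [show 2 * n + 2 - (m + 1) = 2 * n + 1 - m by omega] at hA
  have hP := mul_invFact ((n : ℤ) - m)
  have hQ := mul_invFact (2 * (n : ℤ) + m + 2)
  have hU := mul_invFact (2 * (l : ℤ) + 2 - m)
  have hU' := mul_invFact (2 * (l : ℤ) + 1 - m)
  have hV := mul_invFact (2 * (m : ℤ) - l + 1)
  have hV' := mul_invFact (2 * (m : ℤ) - l)
  rw [show 2 * (n : ℤ) + m + 2 - 1 = 2 * n + m + 1 by ring] at hQ
  rw [show 2 * (l : ℤ) + 2 - m - 1 = 2 * l + 1 - m by ring] at hU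
  rw [← hU, show 2 * (l : ℤ) + 1 - m - 1 = 2 * l - m by ring] at hU'
  rw [add_sub_cancel_right] at hV
  rw [← hV] at hV'
  simp only [G, tauCoeff, betaCoeff, Nat.cast_add, Nat.cast_one]
  rw [show 2 * n + 2 - (m + 1) = 2 * n + 1 - m by omega,
    show l + 1 + m = l + m + 1 by omega, ← add_assoc l m 1,
    show n + (m + 1) + 1 = n + m + 1 + 1 by omega,
    show (n : ℤ) - (m + 1) = n - m - 1 by ring,
    show 2 * (n : ℤ) + (m + 1) + 1 = 2 * n + m + 2 by ring,
    show 2 * (l : ℤ) + 2 - (m + 1) = 2 * l + 1 - m by ring,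
    show 2 * ((m : ℤ) + 1) - l - 1 = 2 * m - l + 1 by ring,
    show 2 * ((l : ℤ) + 1) - m = 2 * l + 2 - m by ring,
    show 2 * (m : ℤ) - (l + 1) + 1 = 2 * m - l by ring,
    hA, ← hP, ← hQ, ← hU', ← hU, ← hV', ← hV, Nat.factorial_succ (n + m + 1),
    Nat.factorial_succ (l + m), show (m : ℚ) + 1 + 1 = m + 2 by ring, hC, pow_succ]
  push_cast
  ring

lemma sum_tauCoeff_betaCoeff (n l : ℕ) (hl : 1 ≤ l) (hln : l ≤ n) :
    ∑ m ∈ range (n + 1), (-1) ^ m * tauCoeff n m * betaCoeff l m = 0 := by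
  have key : ∀ l : ℕ, l + 1 ≤ n →
      ∑ m ∈ range (n + 1), (-1) ^ m * tauCoeff n m * betaCoeff (l + 1) m = 0 := by
    intro l
    induction l with
    | zero =>
      intro h
      have h1 := sum_tauCoeff_betaCoeff_succ n 0
      have h2 : (1 : ℚ) ≤ n := by exact_mod_cast h
      simp only [Nat.cast_zero, zero_mul, zero_add, mul_eq_zero] at h1
      rcases h1 with h1 | h1
      · exfalso
        rcases h1 with h1 | h1
        · norm_num at h1
        · nlinarith
      · exact h1
    | succ l ih =>
      intro h
      have h1 := sum_tauCoeff_betaCoeff_succ n (l + 1)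
      have h2 : (l : ℚ) + 2 ≤ n := by exact_mod_cast h
      have h0 : (0 : ℚ) ≤ l := by positivity
      rw [ih (by omega), mul_zero, zero_add, mul_eq_zero] at h1
      rcases h1 with h1 | h1
      · exfalso
        push_cast at h1
        rcases mul_eq_zero.1 h1 with h1 | h1
        · linarith
        · nlinarith
      · exact h1
  obtain ⟨l, rfl⟩ := Nat.exists_eq_add_of_le' hl
  exact key l hln

/-- The values of the `b_n`-column of the inverse at the vertices `(2(n-m), 2n+1)`. -/
noncomputable def topCoeff (n m : ℕ) : ℚ :=
  (-1) ^ n * tauCoeff n m - if m = 0 then (1 + (-1) ^ n) / 2 else 0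

lemma neg_one_pow_mul_half (n : ℕ) :
    (-1 : ℚ) ^ n * ((1 + (-1) ^ n) / 2) = (1 + (-1) ^ n) / 2 := by
  rcases neg_one_pow_eq_or ℚ n with h | h <;> rw [h] <;> norm_num

/-- The `b_n`-column of the inverse on the odd vertices. -/
noncomputable def oddField (n : ℕ) (a x : ℤ) : ℚ :=
  ∑ m ∈ range (n + 1),
    topCoeff n m * signedBinom ((2 * n + 1 - x + a) / 2 - n + m) (a - 2 * n + 2 * m)

/-- The values of `oddField` just below the diagonal. -/
noncomputable def diagSource (n : ℕ) (a : ℤ) : ℚ :=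
  ∑ m ∈ range (n + 1), topCoeff n m * signedBinom ((m + 1 : ℕ) : ℤ) (a + (2 * m - 2 * n))

/-- The `b_n`-column of the inverse on the diagonal vertices. -/
noncomputable def diagField (n : ℕ) (a : ℤ) : ℚ :=
  ∑ s ∈ range (n + 1), diagSource n (a + 1 + 2 * s) - if a % 2 = 0 then 1 else 0

/-- The `b_n`-column of the inverse on the even vertices. -/
noncomputable def evenField (n : ℕ) (a x : ℤ) : ℚ :=
  (-1) ^ ((x - a) / 2).toNat * binShift ((x - a) / 2).toNat (diagField n) a

lemma oddField_add_add (n : ℕ) {a x : ℤ} (h : (a + x) % 2 = 0) (hx : x ≠ 2 * n + 2) :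
    oddField n (a - 1) x + oddField n a (x + 1) + oddField n a (x - 1) = 0 := by
  simp only [oddField, ← sum_add_distrib, ← mul_add]
  refine sum_eq_zero fun m _ => ?_
  have hp := signedBinom_pascal ((2 * n + 1 - x + (a - 1)) / 2 - n + m)
    (a - 1 - 2 * n + 2 * m) (by omega)
  rw [show (2 * n + 1 - (x + 1) + a) / 2 - n + m = (2 * n + 1 - x + (a - 1)) / 2 - n + m by omega,
    show (2 * n + 1 - (x - 1) + a) / 2 - n + m = (2 * n + 1 - x + (a - 1)) / 2 - n + m + 1 by omega,
    show a - 2 * n + 2 * m = a - 1 - 2 * n + 2 * m + 1 by ring, hp, mul_zero]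

lemma oddField_neg_one (n : ℕ) (x : ℤ) : oddField n (-1) x = 0 := by
  refine sum_eq_zero fun m hm => ?_
  have hm' : m < n + 1 := by simpa using hm
  rw [signedBinom_of_right_neg _ (by omega), mul_zero]

lemma oddField_top (n : ℕ) {a : ℤ} (ha : a % 2 = 1) : oddField n a (2 * n + 2) = 0 := by
  refine sum_eq_zero fun m hm => ?_
  rcases lt_or_ge ((2 * n + 1 - (2 * n + 2) + a) / 2 - n + m) 0 with h | h
  · rw [signedBinom_of_neg h, mul_zero]
  · rw [signedBinom_of_lt (by omega), mul_zero]

lemma oddField_top_row (n i : ℕ) (hi : i ≤ n) :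
    oddField n (2 * i) (2 * n + 1) = topCoeff n (n - i) := by
  rw [oddField, sum_eq_single (n - i)]
  · rw [show (2 * (n : ℤ) + 1 - (2 * n + 1) + 2 * i) / 2 - n + ((n - i : ℕ) : ℤ) = 0 by omega,
      show 2 * (i : ℤ) - 2 * n + 2 * ((n - i : ℕ) : ℤ) = 0 by omega, signedBinom_zero_zero, mul_one]
  · intro m _ hm
    rcases lt_or_ge ((2 * (n : ℤ) + 1 - (2 * n + 1) + 2 * i) / 2 - n + m) 0 with h | h
    · rw [signedBinom_of_neg h, mul_zero]
    · rw [signedBinom_of_lt (by omega), mul_zero]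
  · intro h
    simp at h

lemma oddField_below_diag (n : ℕ) (a : ℤ) : oddField n a (a - 1) = diagSource n a := by
  refine sum_congr rfl fun m _ => ?_
  rw [show (2 * (n : ℤ) + 1 - (a - 1) + a) / 2 - n + m = ((m + 1 : ℕ) : ℤ) by push_cast; omega,
    show a - 2 * (n : ℤ) + 2 * m = a + (2 * m - 2 * n) by ring]

lemma diagSource_of_gt (n : ℕ) {a : ℤ} (ha : 2 * n + 1 < a) : diagSource n a = 0 := by
  refine sum_eq_zero fun m hm => ?_
  rw [signedBinom_of_lt (by push_cast; omega), mul_zero]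

lemma diagField_sub (n : ℕ) {a : ℤ} (ha : -1 ≤ a) :
    diagField n a - diagField n (a + 2) = diagSource n (a + 1) := by
  have h := sum_range_sub' (fun s : ℕ => diagSource n (a + 1 + 2 * s)) (n + 1)
  simp only [sum_sub_distrib] at h
  rw [diagSource_of_gt n (a := a + 1 + 2 * ((n + 1 : ℕ) : ℤ)) (by push_cast; omega)] at h
  have h2 : ∑ s ∈ range (n + 1), diagSource n (a + 2 + 1 + 2 * s)
      = ∑ s ∈ range (n + 1), diagSource n (a + 1 + 2 * ((s + 1 : ℕ) : ℤ)) := by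
    refine sum_congr rfl fun s _ => ?_
    congr 1
    push_cast
    ring
  rw [diagField, diagField, h2, Int.add_emod_right]
  simp only [Nat.cast_zero, mul_zero, add_zero, sub_zero] at h
  linear_combination h

lemma sum_signedBinom (u c M : ℕ) (h : c + u < M) :
    ∑ r ∈ range M, signedBinom u ((r : ℤ) - c) = (-2) ^ u := by
  induction u generalizing c with
  | zero =>
    rw [sum_eq_single c]
    · simp [signedBinom_zero_zero]
    · intro r _ hr
      rcases lt_or_gt_of_ne hr with hr | hr
      · exact signedBinom_of_right_neg _ (by omega)
      · exact signedBinom_of_lt (by push_cast; omega)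
    · intro hc
      simp at hc
      omega
  | succ u ih =>
    have h1 := ih (c + 1) (by omega)
    have h2 := ih c (by omega)
    have h3 : ∀ r : ℕ, signedBinom ((u + 1 : ℕ) : ℤ) ((r : ℤ) - c)
        = -(signedBinom u ((r : ℤ) - ((c + 1 : ℕ) : ℤ)) + signedBinom u ((r : ℤ) - c)) := by
      intro r
      have hp := signedBinom_pascal u ((r : ℤ) - ((c + 1 : ℕ) : ℤ)) (Or.inl (by omega))
      rw [show (r : ℤ) - ((c + 1 : ℕ) : ℤ) + 1 = r - c by push_cast; ring] at hp
      push_cast at hp ⊢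
      linear_combination hp
    simp only [h3, sum_neg_distrib, sum_add_distrib, h1, h2, pow_succ]
    ring

lemma sum_range_two_mul (g : ℕ → ℚ) (M : ℕ) :
    ∑ r ∈ range (2 * M), g r = ∑ s ∈ range M, (g (2 * s) + g (2 * s + 1)) := by
  induction M with
  | zero => simp
  | succ M ih =>
    rw [show 2 * (M + 1) = 2 * M + 1 + 1 by ring, sum_range_succ, sum_range_succ, ih,
      sum_range_succ]
    ring

lemma sum_signedBinom_even (n m : ℕ) (hm : m ≤ n) :
    ∑ s ∈ range (n + 1), signedBinom ((m + 1 : ℕ) : ℤ) (2 * (s : ℤ) + (2 * m - 2 * n))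
      = -(-2) ^ m := by
  have h := sum_signedBinom m (2 * (n - m) + 1) (2 * (n + 1)) (by omega)
  rw [sum_range_two_mul] at h
  rw [← h, ← sum_neg_distrib]
  refine sum_congr rfl fun s _ => ?_
  have hp := signedBinom_pascal m (2 * (s : ℤ) + (2 * m - 2 * n) - 1) (Or.inl (by omega))
  rw [show ((2 * s : ℕ) : ℤ) - ((2 * (n - m) + 1 : ℕ) : ℤ) = 2 * (s : ℤ) + (2 * m - 2 * n) - 1 by
      omega,
    show ((2 * s + 1 : ℕ) : ℤ) - ((2 * (n - m) + 1 : ℕ) : ℤ)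
      = 2 * (s : ℤ) + (2 * m - 2 * n) - 1 + 1 by omega]
  rw [sub_add_cancel] at hp ⊢
  push_cast
  linear_combination hp

lemma diagField_neg_one (n : ℕ) : diagField n (-1) = 0 := by
  have h1 : diagField n (-1) = ∑ m ∈ range (n + 1), topCoeff n m * -(-2) ^ m := by
    rw [diagField, if_neg (by norm_num), sub_zero]
    simp only [diagSource]
    rw [sum_comm]
    refine sum_congr rfl fun m hm => ?_
    have hm' : m ≤ n := by simpa [Nat.lt_succ_iff] using hm
    rw [← mul_sum, ← sum_signedBinom_even n m hm']
    simp
  have h2 : ∀ m, topCoeff n m * -(-2 : ℚ) ^ m = -(-1) ^ n * ((-2) ^ m * tauCoeff n m)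
      + if m = 0 then (1 + (-1) ^ n) / 2 else 0 := by
    intro m
    rw [topCoeff]
    split_ifs with hm
    · subst hm; ring
    · ring
  rw [h1, sum_congr rfl fun m _ => h2 m, sum_add_distrib, ← mul_sum, sum_tauCoeff,
    sum_ite_eq' (range (n + 1)) 0, if_pos (by simp)]
  linear_combination -neg_one_pow_mul_half n

lemma diagField_last_odd (n : ℕ) : diagField n (2 * n + 1) = 0 := by
  rw [diagField, if_neg (by omega), sub_zero]
  exact sum_eq_zero fun s _ => diagSource_of_gt n (by omega)

lemma tauCoeff_zero (n : ℕ) : tauCoeff n 0 = 1 := by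
  have h1 := invFact_natCast n
  have h2 := invFact_natCast (2 * n + 2)
  push_cast at h2
  have h3 := Nat.factorial_ne_zero n
  have h4 := Nat.factorial_ne_zero (2 * n + 1)
  have h5 : (n : ℚ) + 1 ≠ 0 := by positivity
  simp only [tauCoeff, Nat.cast_zero, add_zero, sub_zero, Nat.sub_zero, h1, h2, catalan_zero]
  rw [Nat.factorial_succ (2 * n + 1), Nat.factorial_succ n]
  push_cast
  field_simp
  ring

lemma topCoeff_zero (n : ℕ) : topCoeff n 0 = (-1) ^ n - (1 + (-1) ^ n) / 2 := by
  rw [topCoeff, tauCoeff_zero, if_pos rfl, mul_one]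

lemma diagField_last_even (n : ℕ) : diagField n (2 * n) = -((1 + (-1) ^ n) / 2) := by
  have h1 : diagSource n (2 * n + 1) = -topCoeff n 0 := by
    rw [diagSource, sum_eq_single 0]
    · have hp := signedBinom_pascal 0 0 (by norm_num)
      rw [signedBinom_zero_zero, signedBinom_of_lt (u := 0) (by norm_num)] at hp
      rw [show 2 * (n : ℤ) + 1 + (2 * ((0 : ℕ) : ℤ) - 2 * n) = 0 + 1 by push_cast; ring,
        show (((0 + 1 : ℕ)) : ℤ) = 0 + 1 by norm_num]
      linear_combination topCoeff n 0 * hp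
    · intro m _ hm
      rw [signedBinom_of_lt (by push_cast; omega), mul_zero]
    · simp
  rw [diagField, if_pos (by omega), sum_range_succ']
  rw [sum_eq_zero fun s _ => diagSource_of_gt n (by push_cast; omega)]
  simp only [Nat.cast_zero, mul_zero, add_zero, h1, topCoeff_zero]
  ring

lemma signedBinom_add_two_mul (l m : ℕ) :
    signedBinom ((l + m : ℕ) : ℤ) (2 * m - l) + 2 * signedBinom ((l + m : ℕ) : ℤ) (2 * m - l + 1)
      = (-1) ^ (l + m) * ((3 * l + 1) * betaCoeff l m) := by
  have h1 := mul_invFact (2 * (m : ℤ) - l + 1)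
  have h2 := mul_invFact (2 * (l : ℤ) - m)
  rw [add_sub_cancel_right] at h1
  rw [signedBinom_natCast, signedBinom_natCast, betaCoeff,
    show ((l + m : ℕ) : ℤ) - (2 * m - l) = 2 * l - m by push_cast; ring,
    show ((l + m : ℕ) : ℤ) - (2 * m - l + 1) = 2 * l - m - 1 by push_cast; ring, ← h1, ← h2]
  push_cast
  ring

lemma binShift_diagSource (n l : ℕ) (hl : l + 1 ≤ n) :
    binShift l (diagSource n) (2 * n - 2 * (l + 1 : ℕ) + 1)
      + 2 * binShift l (diagSource n) (2 * n - 2 * (l + 1 : ℕ) + 2)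
      = (3 * (l + 1 : ℕ) + 1) * ((1 + (-1) ^ n) / 2) * betaCoeff (l + 1) 0 := by
  have h1 : ∀ a, binShift l (diagSource n) a = ∑ m ∈ range (n + 1), topCoeff n m *
      ((-1) ^ l * signedBinom ((m + 1 : ℕ) + l) (a + (2 * m - 2 * n) + l)) := by
    intro a
    simp only [← binShift_signedBinom]
    exact binShift_sum _ _ _ _ _
  have h2 : ∀ m, topCoeff n m *
        ((-1) ^ l * signedBinom ((m + 1 : ℕ) + l)
          (2 * n - 2 * (l + 1 : ℕ) + 1 + (2 * m - 2 * n) + l))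
      + 2 * (topCoeff n m * ((-1) ^ l * signedBinom ((m + 1 : ℕ) + l)
          (2 * n - 2 * (l + 1 : ℕ) + 2 + (2 * m - 2 * n) + l)))
      = -(3 * (l + 1 : ℕ) + 1) * (-1) ^ n * ((-1) ^ m * tauCoeff n m * betaCoeff (l + 1) m)
        + if m = 0 then (3 * (l + 1 : ℕ) + 1) * ((1 + (-1) ^ n) / 2) * betaCoeff (l + 1) 0
          else 0 := by
    intro m
    have h := signedBinom_add_two_mul (l + 1) m
    have hs : (-1 : ℚ) ^ l * (-1) ^ (l + 1 + m) = -(-1) ^ m := by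
      rw [pow_add, pow_succ]
      have : (-1 : ℚ) ^ l * (-1) ^ l = 1 := by rw [← mul_pow]; simp
      linear_combination -(-1) ^ m * this
    rw [show ((m + 1 : ℕ) : ℤ) + l = ((l + 1 + m : ℕ) : ℤ) by push_cast; ring,
      show 2 * (n : ℤ) - 2 * (l + 1 : ℕ) + 1 + (2 * m - 2 * n) + l = 2 * m - (l + 1 : ℕ) by
        push_cast; ring,
      show 2 * (n : ℤ) - 2 * (l + 1 : ℕ) + 2 + (2 * m - 2 * n) + l = 2 * m - (l + 1 : ℕ) + 1 by
        push_cast; ring]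
    calc _ = topCoeff n m * ((-1) ^ l * (signedBinom ((l + 1 + m : ℕ) : ℤ) (2 * m - (l + 1 : ℕ))
          + 2 * signedBinom ((l + 1 + m : ℕ) : ℤ) (2 * m - (l + 1 : ℕ) + 1))) := by ring
      _ = topCoeff n m * -(-1) ^ m * ((3 * (l + 1 : ℕ) + 1) * betaCoeff (l + 1) m) := by
        rw [h]
        linear_combination
          topCoeff n m * ((3 * ((l + 1 : ℕ) : ℚ) + 1) * betaCoeff (l + 1) m) * hs
      _ = _ := by
        rw [topCoeff]
        split_ifs with hm
        · subst hm; ring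
        · ring
  rw [h1, h1, mul_sum, ← sum_add_distrib, sum_congr rfl fun m _ => h2 m, sum_add_distrib,
    ← mul_sum, sum_tauCoeff_betaCoeff n (l + 1) (by omega) hl, sum_ite_eq' (range (n + 1)) 0,
    if_pos (by simp)]
  ring

lemma binShift_diagField (n l : ℕ) (hl : l + 1 ≤ n) :
    binShift (l + 2) (diagField n) (2 * n - 2 * (l + 1 : ℕ)) = 0 := by
  have step : ∀ l : ℕ, l + 1 ≤ n → binShift (l + 2) (diagField n) (2 * n - 2 * (l + 1 : ℕ))
      = 2 * binShift (l + 1) (diagField n) (2 * n - 2 * (l : ℕ))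
        + (3 * (l + 1 : ℕ) + 1) * ((1 + (-1) ^ n) / 2) * betaCoeff (l + 1) 0 := by
    intro l hl
    have h := binShift_sub_two_mul (e := diagField n) (F := diagSource n)
      (fun b hb => diagField_sub n (by omega)) l (2 * n - 2 * (l + 1 : ℕ)) (by push_cast; omega)
    rw [binShift_diagSource n l hl,
      show 2 * (n : ℤ) - 2 * (l + 1 : ℕ) + 2 = 2 * n - 2 * l by push_cast; ring] at h
    exact h
  induction l with
  | zero =>
    rw [step 0 hl]
    have h1 := invFact_natCast 2
    have h0 := invFact_natCast 0
    norm_num at h1 h0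
    norm_num [binShift, diagField_last_odd, diagField_last_even, betaCoeff, h0, h1]
    ring
  | succ l ih =>
    rw [step (l + 1) hl, ih (by omega)]
    have h0 : betaCoeff (l + 1 + 1) 0 = 0 := by
      rw [betaCoeff, invFact_of_neg (z := 2 * ((0 : ℕ) : ℤ) - (l + 1 + 1 : ℕ) + 1)
        (by push_cast; omega), mul_zero]
    rw [h0]
    ring

lemma evenField_diag (n : ℕ) (a : ℤ) : evenField n a a = diagField n a := by
  simp [evenField, binShift]

lemma evenField_add_add (n : ℕ) {a x : ℤ} (h : (a + x) % 2 ≠ 0) (hx : a ≤ x) :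
    evenField n (a + 1) x + evenField n a (x + 1) + evenField n a (x - 1) = 0 := by
  obtain ⟨m, rfl⟩ : ∃ m : ℕ, x = a + 1 + 2 * m := ⟨((x - a - 1) / 2).toNat, by omega⟩
  rw [evenField, evenField, evenField,
    show ((a + 1 + 2 * m - (a + 1)) / 2).toNat = m by omega,
    show ((a + 1 + 2 * m + 1 - a) / 2).toNat = m + 1 by omega,
    show ((a + 1 + 2 * m - 1 - a) / 2).toNat = m by omega, binShift_succ, pow_succ]
  ring

lemma evenField_top (n : ℕ) {a : ℤ} (ha : a % 2 = 0) (h0 : 0 ≤ a) (hn : a < 2 * n) :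
    evenField n a (2 * n + 2) = 0 := by
  obtain ⟨l, hl⟩ : ∃ l : ℕ, a = 2 * n - 2 * (l + 1 : ℕ) :=
    ⟨(n - a / 2 - 1).toNat, by push_cast; omega⟩
  have h := binShift_diagField n l (by omega)
  rw [evenField, show ((2 * (n : ℤ) + 2 - a) / 2).toNat = l + 2 by omega, hl, h, mul_zero]

/-- The column of `K_n⁻¹` indexed by `b_n`. -/
noncomputable def invColumn (n : ℕ) (y : ℤ × ℤ) : ℚ :=
  if (y.1 + y.2) % 2 = 0 then evenField n y.1 y.2 else oddField n y.1 y.2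

lemma invColumn_of_even (n : ℕ) {p q : ℤ} (h : (p + q) % 2 = 0) :
    invColumn n (p, q) = evenField n p q := if_pos h

lemma invColumn_of_odd (n : ℕ) {p q : ℤ} (h : (p + q) % 2 ≠ 0) :
    invColumn n (p, q) = oddField n p q := if_neg h

lemma ite_or_of_disjoint {P Q : Prop} [Decidable P] [Decidable Q] (h : P → ¬ Q) :
    (if P ∨ Q then 1 else 0 : ℚ) = (if P then 1 else 0) + (if Q then 1 else 0) := by
  by_cases hP : P
  · simp [hP, h hP]
  · simp [hP]

lemma kfun_sub_kfun_of_even {a x : ℤ} (h : (a + x) % 2 = 0) (y : ℤ × ℤ) :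
    kfun (a, x) y - kfun y (a, x)
      = (if y = (a - 1, x) then 1 else 0) + (if y = (a, x + 1) then 1 else 0)
        + (if y = (a, x - 1) then 1 else 0)
        + (if a = x then (if y = (a - 1, a - 1) then 1 else 0)
            - (if y = (a + 1, a + 1) then 1 else 0) else 0) := by
  obtain ⟨p, q⟩ := y
  have h1 : kfun (a, x) (p, q) = if (p = a - 1 ∧ q = x) ∨ (p = a ∧ q = x + 1) ∨
      (p = a ∧ q = x - 1) ∨ (a = x ∧ p = a - 1 ∧ q = a - 1) then 1 else 0 :=
    if_congr (by dsimp only; omega) rfl rfl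
  have h2 : kfun (p, q) (a, x) = if a = x ∧ p = a + 1 ∧ q = a + 1 then 1 else 0 :=
    if_congr (by dsimp only; omega) rfl rfl
  rw [h1, h2, ite_or_of_disjoint (by omega), ite_or_of_disjoint (by omega),
    ite_or_of_disjoint (by omega)]
  simp only [Prod.mk.injEq]
  by_cases hax : a = x
  · simp only [and_iff_right hax, if_pos hax]
    ring
  · simp only [hax, false_and, if_false]
    ring

lemma kfun_sub_kfun_of_odd {a x : ℤ} (h : (a + x) % 2 ≠ 0) (y : ℤ × ℤ) :
    kfun (a, x) y - kfun y (a, x)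
      = -((if y = (a + 1, x) then 1 else 0) + (if y = (a, x + 1) then 1 else 0)
        + (if y = (a, x - 1) then 1 else 0)) := by
  obtain ⟨p, q⟩ := y
  have h1 : kfun (a, x) (p, q) = 0 := if_neg (by dsimp only; omega)
  have h2 : kfun (p, q) (a, x) = if (p = a + 1 ∧ q = x) ∨ (p = a ∧ q = x + 1) ∨
      (p = a ∧ q = x - 1) then 1 else 0 :=
    if_congr (by dsimp only; omega) rfl rfl
  rw [h1, h2, ite_or_of_disjoint (by omega), ite_or_of_disjoint (by omega)]
  simp only [Prod.mk.injEq]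
  ring

lemma sum_ite_eq_mul (S : Finset (ℤ × ℤ)) (g : ℤ × ℤ → ℚ) (z : ℤ × ℤ) :
    ∑ y ∈ S, (if y = z then 1 else 0) * g y = if z ∈ S then g z else 0 := by
  simp [ite_mul, sum_ite_eq']

lemma sum_kfun_of_even {a x : ℤ} (h : (a + x) % 2 = 0) (S : Finset (ℤ × ℤ)) (g : ℤ × ℤ → ℚ) :
    ∑ y ∈ S, (kfun (a, x) y - kfun y (a, x)) * g y
      = (if (a - 1, x) ∈ S then g (a - 1, x) else 0)
        + (if (a, x + 1) ∈ S then g (a, x + 1) else 0)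
        + (if (a, x - 1) ∈ S then g (a, x - 1) else 0)
        + (if a = x then (if (a - 1, a - 1) ∈ S then g (a - 1, a - 1) else 0)
            - (if (a + 1, a + 1) ∈ S then g (a + 1, a + 1) else 0) else 0) := by
  simp only [kfun_sub_kfun_of_even h, ← sum_ite_eq_mul S g]
  split_ifs with hax
  · simp only [add_mul, sub_mul, sum_add_distrib, sum_sub_distrib]
  · simp only [add_mul, sum_add_distrib, zero_mul, sum_const_zero]

lemma sum_kfun_of_odd {a x : ℤ} (h : (a + x) % 2 ≠ 0) (S : Finset (ℤ × ℤ)) (g : ℤ × ℤ → ℚ) :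
    ∑ y ∈ S, (kfun (a, x) y - kfun y (a, x)) * g y
      = -((if (a + 1, x) ∈ S then g (a + 1, x) else 0)
        + (if (a, x + 1) ∈ S then g (a, x + 1) else 0)
        + (if (a, x - 1) ∈ S then g (a, x - 1) else 0)) := by
  simp only [kfun_sub_kfun_of_odd h, ← sum_ite_eq_mul S g, neg_mul, sum_neg_distrib, add_mul,
    sum_add_distrib]

lemma mem_Vfin {n : ℕ} {y : ℤ × ℤ} : y ∈ Vfin n ↔ memV n y := by
  simp only [Vfin, mem_filter, mem_product, mem_Icc, and_iff_right_iff_imp]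
  intro h
  obtain ⟨h1, h2, h3, h4, -⟩ := h
  omega

lemma sum_kfun_invColumn_of_odd {n : ℕ} {a x : ℤ} (hV : memV n (a, x)) (h : (a + x) % 2 ≠ 0) :
    ∑ y ∈ Vfin n, (kfun (a, x) y - kfun y (a, x)) * invColumn n y
      = if (a, x) = bvertex n then 1 else 0 := by
  obtain ⟨h0, h1, h2, h3, h4⟩ := hV
  dsimp only at h0 h1 h2 h3 h4
  have hc : ∀ p q : ℤ, (p + q) % 2 = 0 → (p ≤ 2 * n ∧ q ≤ 2 * n + 1 ∨ evenField n p q = 0) →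
      0 ≤ p → p ≤ q → p ≤ 2 * n → ¬ (p = 2 * (n : ℤ) ∧ q = 2 * (n : ℤ) + 1) →
      (if (p, q) ∈ Vfin n then invColumn n (p, q) else 0) = evenField n p q := by
    intro p q hpq hz hp hq hp' hne
    rw [invColumn_of_even n hpq]
    split_ifs with hm
    · rfl
    · rcases hz with hz | hz
      · refine absurd (mem_Vfin.2 ⟨hp, hz.1, hq, hz.2, ?_⟩) hm
        rintro ⟨-, r1, r2⟩
        exact hne ⟨r1, r2⟩
      · exact hz.symm
  rw [sum_kfun_of_odd h]
  by_cases ha : a = 2 * n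
  · have hx' : x = 2 * n + 1 := by omega
    have hn : n % 2 = 0 := by omega
    subst ha hx'
    have e1 : ((2 * (n : ℤ) + 1, 2 * (n : ℤ) + 1) : ℤ × ℤ) ∉ Vfin n := by
      rw [mem_Vfin]; rintro ⟨-, r, -⟩; dsimp only at r; omega
    have e2 : ((2 * (n : ℤ), 2 * (n : ℤ) + 1 + 1) : ℤ × ℤ) ∉ Vfin n := by
      rw [mem_Vfin]; rintro ⟨-, -, -, r, -⟩; dsimp only at r; omega
    rw [if_neg e1, if_neg e2, hc _ _ (by omega) (Or.inl (by omega)) (by omega) (by omega) (by omega)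
      (by omega), if_pos (by simp [bvertex, hn]), add_sub_cancel_right, evenField_diag,
      diagField_last_even, (Nat.even_iff.2 hn).neg_one_pow]
    norm_num
  · have ht : x + 1 ≤ 2 * n + 1 ∨ evenField n a (x + 1) = 0 := by
      by_cases hx' : x = 2 * n + 1
      · right
        subst hx'
        exact evenField_top n (by omega) h0 (by omega)
      · left; omega
    have hb : (a, x) ≠ bvertex n := by
      intro hb
      exact ha (congrArg Prod.fst hb)
    rw [if_neg hb, hc (a + 1) x (by omega) (Or.inl (by omega)) (by omega) (by omega) (by omega)
      (by omega), hc a (x + 1) (by omega) (ht.imp_left fun r => ⟨h1, r⟩) (by omega) (by omega)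
      (by omega) (by omega), hc a (x - 1) (by omega) (Or.inl (by omega)) (by omega)
      (by omega) (by omega) (by omega), evenField_add_add n h h2, neg_zero]

lemma sum_kfun_invColumn_of_even {n : ℕ} {a x : ℤ} (hV : memV n (a, x)) (h : (a + x) % 2 = 0) :
    ∑ y ∈ Vfin n, (kfun (a, x) y - kfun y (a, x)) * invColumn n y
      = if (a, x) = bvertex n then 1 else 0 := by
  obtain ⟨h0, h1, h2, h3, h4⟩ := hV
  dsimp only at h0 h1 h2 h3 h4
  have hleft : (if (a - 1, x) ∈ Vfin n then invColumn n (a - 1, x) else 0)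
      = oddField n (a - 1) x := by
    rw [invColumn_of_odd n (by omega)]
    split_ifs with hm
    · rfl
    · rw [mem_Vfin] at hm
      have ha : a = 0 := by
        by_contra ha
        exact hm ⟨by dsimp only; omega, by dsimp only; omega, by dsimp only; omega,
          h3, by dsimp only; omega⟩
      rw [ha, zero_sub, oddField_neg_one]
  rw [sum_kfun_of_even h, hleft]
  by_cases hax : a = x
  · subst hax
    have ha : a ≤ 2 * n := h1
    have hdown : ((a, a - 1) : ℤ × ℤ) ∉ Vfin n := by
      rw [mem_Vfin]; rintro ⟨-, -, r, -⟩; dsimp only at r; omega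
    have hprev : (if (a - 1, a - 1) ∈ Vfin n then invColumn n (a - 1, a - 1) else 0)
        = diagField n (a - 1) := by
      rw [invColumn_of_even n (by omega), evenField_diag]
      split_ifs with hm
      · rfl
      · rw [mem_Vfin] at hm
        have ha : a = 0 := by
          by_contra ha
          exact hm ⟨by dsimp only; omega, by dsimp only; omega, le_rfl,
            by dsimp only; omega, by dsimp only; omega⟩
        rw [ha, zero_sub, diagField_neg_one]
    have hnext : (if (a + 1, a + 1) ∈ Vfin n then invColumn n (a + 1, a + 1) else 0)
        = diagField n (a + 1) := by
      rw [invColumn_of_even n (by omega), evenField_diag]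
      split_ifs with hm
      · rfl
      · rw [mem_Vfin] at hm
        have ha : a = 2 * n := by
          by_contra ha
          exact hm ⟨by dsimp only; omega, by dsimp only; omega, le_rfl,
            by dsimp only; omega, by dsimp only; omega⟩
        rw [ha, diagField_last_odd]
    have hrec := oddField_add_add n (a := a) (x := a) h (by omega)
    have hdiag := diagField_sub n (a := a - 1) (by omega)
    rw [oddField_below_diag] at hrec
    rw [sub_add_cancel, show a - 1 + 2 = a + 1 by ring] at hdiag
    rw [if_neg hdown, if_pos rfl, hprev, hnext]
    by_cases hb : a = 2 * n ∧ n % 2 = 1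
    · obtain ⟨rfl, hn⟩ := hb
      have hup : ((2 * (n : ℤ), 2 * (n : ℤ) + 1) : ℤ × ℤ) ∉ Vfin n := by
        rw [mem_Vfin]; rintro ⟨-, -, -, -, r⟩; exact r ⟨hn, rfl, rfl⟩
      have ht := oddField_top_row n n le_rfl
      rw [Nat.sub_self, topCoeff_zero, (Nat.odd_iff.2 hn).neg_one_pow] at ht
      rw [if_neg hup, if_pos (by simp [bvertex, hn])]
      linear_combination hrec + hdiag - ht
    · have hup : ((a, a + 1) : ℤ × ℤ) ∈ Vfin n := by
        refine mem_Vfin.2 ⟨h0, h1, ?_, ?_, ?_⟩ <;> dsimp only <;> omega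
      rw [if_pos hup, if_neg, invColumn_of_odd n (by omega)]
      · linear_combination hrec + hdiag
      · intro hb'
        have r1 := congrArg Prod.fst hb'
        have r2 := congrArg Prod.snd hb'
        simp only [bvertex] at r1 r2
        omega
  · have hup : (if (a, x + 1) ∈ Vfin n then invColumn n (a, x + 1) else 0)
        = oddField n a (x + 1) := by
      rw [invColumn_of_odd n (by omega)]
      split_ifs with hm
      · rfl
      · rw [mem_Vfin] at hm
        have hx : x = 2 * n + 1 := by
          by_contra hx
          exact hm ⟨h0, h1, by dsimp only; omega, by dsimp only; omega, by dsimp only; omega⟩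
        rw [hx, show 2 * (n : ℤ) + 1 + 1 = 2 * n + 2 by ring, oddField_top n (by omega)]
    have hdown : ((a, x - 1) : ℤ × ℤ) ∈ Vfin n := by
      refine mem_Vfin.2 ⟨h0, h1, ?_, ?_, ?_⟩ <;> dsimp only <;> omega
    have hb : (a, x) ≠ bvertex n := by
      intro hb
      have r1 := congrArg Prod.fst hb
      have r2 := congrArg Prod.snd hb
      simp only [bvertex] at r1 r2
      omega
    rw [hup, if_pos hdown, if_neg hax, if_neg hb, invColumn_of_odd n (by omega),
      add_zero]
    exact oddField_add_add n h (by omega)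

lemma Kmat_mulVec_invColumn (n : ℕ) (hb : bvertex n ∈ Vfin n) :
    (Kmat n).mulVec (fun y => invColumn n y.1) = Pi.single ⟨bvertex n, hb⟩ 1 := by
  ext ⟨⟨a, x⟩, hV⟩
  have h1 : (Kmat n).mulVec (fun y => invColumn n y.1) ⟨(a, x), hV⟩
      = ∑ y ∈ Vfin n, (kfun (a, x) y - kfun y (a, x)) * invColumn n y := by
    rw [← Finset.sum_coe_sort]
    rfl
  rw [h1]
  simp only [Pi.single_apply, Subtype.mk.injEq]
  by_cases h : (a + x) % 2 = 0
  · exact sum_kfun_invColumn_of_even (mem_Vfin.1 hV) h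
  · exact sum_kfun_invColumn_of_odd (mem_Vfin.1 hV) h

lemma topCoeff_eq_pnk (n i : ℕ) (hi : i + 1 ≤ n) :
    topCoeff n (n - i) = (-1) ^ (n - i) * pnk n i 0 := by
  obtain ⟨d, rfl⟩ := Nat.exists_eq_add_of_le hi
  have h1 := invFact_natCast i
  have h2 := invFact_natCast (3 * (i + 1 + d) - i + 2)
  rw [topCoeff, if_neg (by omega), tauCoeff, pnk,
    show ((i + 1 + d : ℕ) : ℤ) - ((i + 1 + d - i : ℕ) : ℤ) = i by omega,
    show 2 * ((i + 1 + d : ℕ) : ℤ) + ((i + 1 + d - i : ℕ) : ℤ) + 2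
      = ((3 * (i + 1 + d) - i + 2 : ℕ) : ℤ) by omega, h1, h2,
    show i + 1 + d - i = d + 1 by omega,
    show 2 * (i + 1 + d) + 1 - (d + 1) = i + 1 + d + i - 2 * 0 + 1 by omega,
    show i + 1 + d + (d + 1) + 1 = 2 * (i + 1 + d) - i - 0 + 1 by omega,
    show i - 0 = i by omega,
    show 3 * (i + 1 + d) - i + 2 - 2 * 0 = 3 * (i + 1 + d) - i + 2 by omega,
    show i + 1 + d = d + 1 + i by omega, pow_add]
  push_cast
  rw [div_eq_mul_inv, mul_inv]
  ring

/-- Let `n ≥ 1` and suppose the Kasteleyn matrix `K_n` over `ℚ` is invertible. Then for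
`0 ≤ i ≤ n−1`, the `((2i,2n+1), b_n)` entry of `K_n⁻¹` equals `(−1)^{n−i}·p(n,i,0)`. -/
theorem Kinv_top_row (n : ℕ) (hn : 1 ≤ n) (hdet : IsUnit (Kmat n).det)
    (i : ℕ) (hi : i + 1 ≤ n)
    (hx : ((2*(i:ℤ), 2*(n:ℤ)+1)) ∈ Vfin n) (hb : bvertex n ∈ Vfin n) :
    (Kmat n)⁻¹ ⟨(2*(i:ℤ), 2*(n:ℤ)+1), hx⟩ ⟨bvertex n, hb⟩
      = (-1)^(n-i) * pnk n i 0 := by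
  have hcol := congrArg ((Kmat n)⁻¹.mulVec) (Kmat_mulVec_invColumn n hb)
  rw [Matrix.mulVec_mulVec, Matrix.nonsing_inv_mul _ hdet, Matrix.one_mulVec,
    Matrix.mulVec_single_one] at hcol
  have hentry := congrFun hcol ⟨(2*(i:ℤ), 2*(n:ℤ)+1), hx⟩
  rw [Matrix.col_apply] at hentry
  rw [← hentry, invColumn_of_odd n (by omega)]
  exact (oddField_top_row n i (by omega)).trans (topCoeff_eq_pnk n i hi)
end

section
/- For every even integer n ≥ 0, if the Kasteleyn matrix K_n, regarded as a matrix over ℚ, is invertible, then K_n⁻¹((2n,2n), b_n) = −1. -/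
open Finset

/-- For even `n` the vertex `b_n = (2n, 2n+1)` is a leaf of `G_n`, attached to `(2n,2n)`: its row
in the Kasteleyn matrix has a single nonzero entry, equal to `-1`. -/
theorem kfun_sub_kfun_bvertex {n : ℕ} (hne : Even n) {z : ℤ × ℤ} (hz : memV n z) :
    kfun (bvertex n) z - kfun z (bvertex n) =
      if z = (2*(n:ℤ), 2*(n:ℤ)) then -1 else 0 := by
  obtain ⟨z₁, z₂⟩ := z
  have hmod : n % 2 = 0 := Nat.even_iff.mp hne
  simp only [memV] at hz
  simp only [kfun, bvertex, hmod, Prod.mk.injEq]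
  rw [if_neg (by omega)]
  by_cases h : z₁ = 2*(n:ℤ) ∧ z₂ = 2*(n:ℤ)
  · rw [if_pos (by omega), if_pos h, zero_sub]
  · rw [if_neg (by omega), if_neg h, sub_zero]

/-- For every even `n ≥ 0`, if the Kasteleyn matrix `K_n` over `ℚ` is invertible, then
`K_n⁻¹((2n,2n), b_n) = −1`. -/
theorem Kinv_corner (n : ℕ) (hne : Even n) (hdet : IsUnit (Kmat n).det)
    (hx : ((2*(n:ℤ), 2*(n:ℤ))) ∈ Vfin n) (hb : bvertex n ∈ Vfin n) :
    (Kmat n)⁻¹ ⟨(2*(n:ℤ), 2*(n:ℤ)), hx⟩ ⟨bvertex n, hb⟩ = -1 := by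
  have hrow := congrFun (congrFun (Matrix.mul_nonsing_inv (Kmat n) hdet) ⟨bvertex n, hb⟩)
    ⟨bvertex n, hb⟩
  have hK : ∀ z : ↥(Vfin n), Kmat n ⟨bvertex n, hb⟩ z =
      if z = ⟨(2*(n:ℤ), 2*(n:ℤ)), hx⟩ then -1 else 0 := fun z => by
    simpa [Kmat, Subtype.ext_iff] using kfun_sub_kfun_bvertex hne (Finset.mem_filter.mp z.2).2
  simp only [Matrix.mul_apply, hK, ite_mul, zero_mul, Finset.sum_ite_eq', Finset.mem_univ,
    if_true, Matrix.one_apply_eq] at hrow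
  linarith
end
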